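/- Let $k > s \ge 1$ be integers and $n > 2k - s$. If $\mathcal{A}, \mathcal{B} \subseteq \binom{[n]}{k}$ are non-empty families with $|A \cap B| \ge s$ for all $A \in \mathcal{A}$, $B \in \mathcal{B}$, then $|\mathcal{A}| + |\mathcal{B}| \le |\mathcal{C}| + 1$, where $\mathcal{C} = \{C \in \binom{[n]}{k} : |C \cap [k]| \ge s\}$. -/

import Mathlib

/-- Neighbourhood of `S` inside `V` for the relation `R`. -/
noncomputable def nbr {β : Type*} (V : Finset β) (R : β → β → Prop) (S : Finset β) : Finset β :=
  by classical exact V.filter (fun b => ∃ a ∈ S, R a b)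

theorem mem_nbr {β : Type*} (V : Finset β) (R : β → β → Prop) (S : Finset β) (b : β) :
    b ∈ nbr V R S ↔ b ∈ V ∧ ∃ a ∈ S, R a b := by
  classical
  simp [nbr]

theorem nbr_subset {β : Type*} (V : Finset β) (R : β → β → Prop) (S : Finset β) :
    nbr V R S ⊆ V := fun b hb => ((mem_nbr V R S b).1 hb).1

theorem nbr_image {β : Type*} [DecidableEq β] (V : Finset β) (R : β → β → Prop) (S : Finset β)
    (g : β → β) (hgi : ∀ x, g (g x) = x) (hgV : ∀ x ∈ V, g x ∈ V)
    (hgR : ∀ x y, R x y → R (g x) (g y)) :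
    nbr V R (S.image g) = (nbr V R S).image g := by
  ext b
  simp only [mem_nbr, Finset.mem_image]
  constructor
  · rintro ⟨hb, _, ⟨a, ha, rfl⟩, h⟩
    refine ⟨g b, ⟨hgV _ hb, a, ha, ?_⟩, hgi b⟩
    have := hgR _ _ h
    rwa [hgi] at this
  · rintro ⟨c, ⟨hc, a, ha, h⟩, rfl⟩
    exact ⟨hgV _ hc, g a, ⟨a, ha, rfl⟩, hgR _ _ h⟩

theorem card_image_invol {β : Type*} [DecidableEq β] (S : Finset β)
    (g : β → β) (hgi : ∀ x, g (g x) = x) : (S.image g).card = S.card :=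
  Finset.card_image_of_injective _ (Function.LeftInverse.injective hgi)

/-- Existence of an atom which is a block for every involutive automorphism. -/
theorem exists_atom {β : Type*} [DecidableEq β] (V : Finset β) (R : β → β → Prop)
    (hsymm : ∀ x y, R x y → R y x) (d : ℕ) (S : Finset β) (hSV : S ⊆ V) (hS : S.Nonempty)
    (hSN : nbr V R S ≠ V) (hSd : (nbr V R S).card + 1 < S.card + d) :
    ∃ A ⊆ V, A.Nonempty ∧ nbr V R A ≠ V ∧ (nbr V R A).card + 1 < A.card + d ∧
      ∀ g : β → β, (∀ x, g (g x) = x) → (∀ x ∈ V, g x ∈ V) →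
        (∀ x y, R x y → R (g x) (g y)) → (∃ x ∈ A, g x ∈ A) → A.image g = A := by
  classical
  let F := V.powerset.filter (fun T => T.Nonempty ∧ nbr V R T ≠ V)
  have memF : ∀ T, T ∈ F ↔ T ⊆ V ∧ T.Nonempty ∧ nbr V R T ≠ V := by
    intro T; simp [F]
  let f : Finset β → ℤ := fun T => (nbr V R T).card - T.card
  obtain ⟨T, hTF, hTmin⟩ := F.exists_min_image f ⟨S, (memF S).2 ⟨hSV, hS, hSN⟩⟩
  let F' := F.filter (fun U => f U = f T)
  obtain ⟨A, hAF', hAmin⟩ := F'.exists_min_image Finset.card ⟨T, by simp [F', hTF]⟩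
  have hAF : A ∈ F := (Finset.mem_filter.1 hAF').1
  have hfA : f A = f T := (Finset.mem_filter.1 hAF').2
  have hmin : ∀ U, U ⊆ V → U.Nonempty → nbr V R U ≠ V → f A ≤ f U := by
    intro U h1 h2 h3
    rw [hfA]; exact hTmin U ((memF U).2 ⟨h1, h2, h3⟩)
  have hcmin : ∀ U, U ⊆ V → U.Nonempty → nbr V R U ≠ V → f U ≤ f A → A.card ≤ U.card := by
    intro U h1 h2 h3 h4
    apply hAmin
    refine Finset.mem_filter.2 ⟨(memF U).2 ⟨h1, h2, h3⟩, ?_⟩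
    have := hmin U h1 h2 h3
    omega
  obtain ⟨hAV, hAne, hAN⟩ := (memF A).1 hAF
  have hNAV := nbr_subset V R A
  have hcNA := Finset.card_le_card hNAV
  -- duality
  have hdual : A.card ≤ V.card - (nbr V R A).card := by
    have hBc : (V \ nbr V R A).card = V.card - (nbr V R A).card :=
      Finset.card_sdiff_of_subset hNAV
    have hNB : nbr V R (V \ nbr V R A) ⊆ V \ A := by
      intro c hc
      obtain ⟨hcV, b, hb, hr⟩ := (mem_nbr _ _ _ _).1 hc
      refine Finset.mem_sdiff.2 ⟨hcV, fun hcA => ?_⟩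
      obtain ⟨hbV, hb'⟩ := Finset.mem_sdiff.1 hb
      exact hb' ((mem_nbr _ _ _ _).2 ⟨hbV, c, hcA, hsymm _ _ hr⟩)
    have h1 := Finset.card_le_card hNB
    rw [Finset.card_sdiff_of_subset hAV] at h1
    have h2 := Finset.card_le_card hAV
    rw [← hBc]
    apply hcmin
    · exact Finset.sdiff_subset
    · rw [Finset.sdiff_nonempty]
      exact fun h => hAN (Finset.Subset.antisymm hNAV h)
    · intro h
      rw [h] at hNB
      obtain ⟨a, ha⟩ := hAne
      exact (Finset.mem_sdiff.1 (hNB (hAV ha))).2 ha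
    · simp only [f]
      omega
  refine ⟨A, hAV, hAne, hAN, ?_, ?_⟩
  · have := hmin S hSV hS hSN
    simp only [f] at this
    omega
  · intro g hgi hgV hgR ⟨x, hx, hgx⟩
    have hNi := nbr_image V R A g hgi hgV hgR
    have hNc : (nbr V R (A.image g)).card = (nbr V R A).card := by
      rw [hNi, card_image_invol _ g hgi]
    have hAc := card_image_invol A g hgi
    set A' := A.image g with hA'
    have hA'V : A' ⊆ V := by
      intro y hy
      obtain ⟨z, hz, rfl⟩ := Finset.mem_image.1 hy
      exact hgV _ (hAV hz)
    have hI : (A ∩ A').Nonempty := ⟨g x, Finset.mem_inter.2 ⟨hgx, Finset.mem_image_of_mem _ hx⟩⟩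
    have hIsub : nbr V R (A ∩ A') ⊆ nbr V R A ∩ nbr V R A' := by
      intro b hb
      obtain ⟨hbV, a, ha, hr⟩ := (mem_nbr _ _ _ _).1 hb
      rw [Finset.mem_inter] at ha
      exact Finset.mem_inter.2 ⟨(mem_nbr _ _ _ _).2 ⟨hbV, a, ha.1, hr⟩,
        (mem_nbr _ _ _ _).2 ⟨hbV, a, ha.2, hr⟩⟩
    have hU : nbr V R (A ∪ A') = nbr V R A ∪ nbr V R A' := by
      ext b
      simp only [mem_nbr, Finset.mem_union]
      constructor
      · rintro ⟨h, a, h1 | h1, h2⟩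
        · exact Or.inl ⟨h, a, h1, h2⟩
        · exact Or.inr ⟨h, a, h1, h2⟩
      · rintro (⟨h, a, h1, h2⟩ | ⟨h, a, h1, h2⟩)
        · exact ⟨h, a, Or.inl h1, h2⟩
        · exact ⟨h, a, Or.inr h1, h2⟩
    have hINV : nbr V R (A ∩ A') ≠ V := by
      intro h
      rw [h] at hIsub
      exact hAN (Finset.Subset.antisymm hNAV (hIsub.trans Finset.inter_subset_left))
    have hIV : A ∩ A' ⊆ V := Finset.inter_subset_left.trans hAV
    have hIf := hmin _ hIV hI hINV
    have c1 := Finset.card_le_card hIsub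
    have c2 := Finset.card_union_add_card_inter (nbr V R A) (nbr V R A')
    have c3 := Finset.card_union_add_card_inter A A'
    have c4 : 0 < (A ∩ A').card := hI.card_pos
    have key : A.card ≤ (A ∩ A').card := by
      by_cases hUV : nbr V R (A ∪ A') = V
      · exfalso
        rw [← hU, hUV] at c2
        simp only [f] at hIf
        omega
      · have hUf := hmin _ (Finset.union_subset hAV hA'V)
          (hAne.mono Finset.subset_union_left) hUV
        apply hcmin _ hIV hI hINV
        rw [← hU] at c2
        simp only [f] at hIf hUf ⊢
        omega
    have e1 : A ∩ A' = A := Finset.eq_of_subset_of_card_le Finset.inter_subset_left key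
    have e2 : A ⊆ A' := Finset.inter_eq_left.1 e1
    exact (Finset.eq_of_subset_of_card_le e2 hAc.le).symm

/-- The action of a transposition on finite sets. -/
def sw (x y : ℕ) (a : Finset ℕ) : Finset ℕ := a.image (Equiv.swap x y)

theorem mem_sw (x y z : ℕ) (a : Finset ℕ) : z ∈ sw x y a ↔ Equiv.swap x y z ∈ a := by
  unfold sw
  rw [Finset.mem_image]
  constructor
  · rintro ⟨w, hw, rfl⟩
    simpa using hw
  · intro h
    exact ⟨_, h, by simp⟩

theorem sw_sw (x y : ℕ) (a : Finset ℕ) : sw x y (sw x y a) = a := by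
  ext z; simp [mem_sw]

theorem card_sw (x y : ℕ) (a : Finset ℕ) : (sw x y a).card = a.card :=
  Finset.card_image_of_injective _ (Equiv.injective _)

theorem sw_inter (x y : ℕ) (a b : Finset ℕ) : sw x y a ∩ sw x y b = sw x y (a ∩ b) := by
  ext z; simp [mem_sw]

theorem sw_mem_V {n k x y : ℕ} (hx : x < n) (hy : y < n) (a : Finset ℕ)
    (ha : a ∈ (Finset.range n).powersetCard k) : sw x y a ∈ (Finset.range n).powersetCard k := by
  rw [Finset.mem_powersetCard] at ha ⊢
  refine ⟨fun z hz => ?_, by rw [card_sw]; exact ha.2⟩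
  rw [mem_sw] at hz
  have := Finset.mem_range.1 (ha.1 hz)
  rw [Finset.mem_range]
  by_cases h1 : z = x
  · omega
  by_cases h2 : z = y
  · omega
  rwa [Equiv.swap_apply_of_ne_of_ne h1 h2] at this

theorem sw_fix {x y : ℕ} {a : Finset ℕ} (h : x ∈ a ↔ y ∈ a) : sw x y a = a := by
  ext z
  rw [mem_sw, Equiv.swap_apply_def]
  split_ifs with h1 h2
  · subst h1; exact h.symm
  · subst h2; exact h
  · rfl

/-- Connectivity of the Johnson graph. -/
theorem johnson_induct {n k : ℕ} (P : Finset ℕ → Prop)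
    (hP : ∀ c ∈ (Finset.range n).powersetCard k, P c → ∀ x ∈ c, ∀ y, y < n → y ∉ c → P (sw x y c))
    (b : Finset ℕ) (hb : b ∈ (Finset.range n).powersetCard k) :
    ∀ (m : ℕ) (c : Finset ℕ), c ∈ (Finset.range n).powersetCard k → (b \ c).card = m → P c → P b := by
  intro m
  induction m with
  | zero =>
    intro c hc h0 hPc
    rw [Finset.card_eq_zero, Finset.sdiff_eq_empty_iff_subset] at h0
    rw [Finset.mem_powersetCard] at hb hc
    rwa [Finset.eq_of_subset_of_card_le h0 (by omega)]
  | succ m ih =>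
    intro c hc h0 hPc
    have hb' := Finset.mem_powersetCard.1 hb
    have hc' := Finset.mem_powersetCard.1 hc
    obtain ⟨y, hy⟩ : (b \ c).Nonempty := by rw [← Finset.card_pos]; omega
    have hcb : (c \ b).card = (b \ c).card :=
      Finset.card_sdiff_comm (by omega)
    obtain ⟨x, hx⟩ : (c \ b).Nonempty := by rw [← Finset.card_pos]; omega
    rw [Finset.mem_sdiff] at hx
    have hy' := Finset.mem_sdiff.1 hy
    have hyn := Finset.mem_range.1 (hb'.1 hy'.1)
    have hxn := Finset.mem_range.1 (hc'.1 hx.1)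
    refine ih (sw x y c) (sw_mem_V hxn hyn c hc) ?_ (hP c hc hPc x hx.1 y hyn hy'.2)
    have : b \ sw x y c = (b \ c).erase y := by
      ext z
      rw [Finset.mem_erase, Finset.mem_sdiff, Finset.mem_sdiff, mem_sw, Equiv.swap_apply_def]
      split_ifs with h1 h2
      · subst h1; tauto
      · subst h2; tauto
      · tauto
    rw [this, Finset.card_erase_of_mem hy]
    omega

theorem sw_R (s x y : ℕ) (a b : Finset ℕ) (h : (a ∩ b).card < s) :
    (sw x y a ∩ sw x y b).card < s := by
  rw [sw_inter, card_sw]; exact h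

theorem s_cross_intersecting_upper_bound (n k s : ℕ) (hs : 1 ≤ s) (hsk : s < k)
    (hn : 2 * k - s < n)
    (A B : Finset (Finset ℕ))
    (hA : A ⊆ (Finset.range n).powersetCard k)
    (hB : B ⊆ (Finset.range n).powersetCard k)
    (hAne : A.Nonempty) (hBne : B.Nonempty)
    (hcross : ∀ a ∈ A, ∀ b ∈ B, s ≤ (a ∩ b).card) :
    A.card + B.card ≤
      (((Finset.range n).powersetCard k).filter
        (fun C => s ≤ (C ∩ Finset.range k).card)).card + 1 := by
  classical
  set V := (Finset.range n).powersetCard k with hV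
  let R : Finset ℕ → Finset ℕ → Prop := fun a b => (a ∩ b).card < s
  have hsymm : ∀ x y, R x y → R y x := by
    intro x y h
    simp only [R] at *
    rwa [Finset.inter_comm]
  have hkV : Finset.range k ∈ V := by
    rw [hV, Finset.mem_powersetCard]
    exact ⟨Finset.range_subset_range.2 (by omega), by simp⟩
  obtain ⟨d, hd⟩ : ∃ d, d = (nbr V R {Finset.range k}).card := ⟨_, rfl⟩
  have hdeg : ∀ a ∈ V, (nbr V R {a}).card = d := by
    intro a ha
    refine johnson_induct (n := n) (k := k) (fun c => (nbr V R {c}).card = d) ?_ a ha _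
      (Finset.range k) hkV rfl hd.symm
    intro c hc hP x hx y hy hyc
    have hxn : x < n := Finset.mem_range.1 ((Finset.mem_powersetCard.1 hc).1 hx)
    have := nbr_image V R {c} (sw x y) (sw_sw x y) (sw_mem_V hxn hy) (sw_R s x y)
    rw [Finset.image_singleton] at this
    rw [this, card_image_invol _ _ (sw_sw x y)]
    exact hP
  have hCd : (V.filter (fun C => s ≤ (C ∩ Finset.range k).card)).card + d = V.card := by
    rw [← Finset.card_filter_add_card_filter_not (s := V)
      (fun C => s ≤ (C ∩ Finset.range k).card), hd]
    congr 2
    ext b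
    simp [mem_nbr, R, Finset.inter_comm]
  have hNAB : nbr V R A ⊆ V \ B := by
    intro b hb
    obtain ⟨hbV, a, ha, hr⟩ := (mem_nbr _ _ _ _).1 hb
    refine Finset.mem_sdiff.2 ⟨hbV, fun hbB => ?_⟩
    have := hcross a ha b hbB
    simp only [R] at hr
    omega
  have hc1 := Finset.card_le_card hNAB
  rw [Finset.card_sdiff_of_subset hB] at hc1
  have hc2 := Finset.card_le_card hB
  by_contra hcon
  have hNA : nbr V R A ≠ V := by
    intro h
    rw [h] at hNAB
    obtain ⟨b, hb⟩ := hBne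
    exact (Finset.mem_sdiff.1 (hNAB (hB hb))).2 hb
  obtain ⟨T, hTV, hTne, hTN, hTd, hblock⟩ :=
    exists_atom V R hsymm d A hA hAne hNA (by omega)
  -- invariance under fixing swaps
  have hinv : ∀ a ∈ T, ∀ x y, x < n → y < n → (x ∈ a ↔ y ∈ a) → ∀ c ∈ T, sw x y c ∈ T := by
    intro a ha x y hx hy hxy c hc
    have := hblock (sw x y) (sw_sw x y) (sw_mem_V hx hy) (sw_R s x y)
      ⟨a, ha, by rw [sw_fix hxy]; exact ha⟩
    rw [← this]
    exact Finset.mem_image_of_mem _ hc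
  -- one neighbour gives all neighbours
  have hnb : ∀ c ∈ T, ∀ x ∈ c, ∀ y, y < n → y ∉ c → sw x y c ∈ T →
      ∀ x' ∈ c, ∀ y', y' < n → y' ∉ c → sw x' y' c ∈ T := by
    intro c hc x hx y hy hyc h x' hx' y' hy' hyc'
    have hlt : ∀ z ∈ c, z < n := fun z hz =>
      Finset.mem_range.1 ((Finset.mem_powersetCard.1 (hTV hc)).1 hz)
    have h1 := hinv c hc x x' (hlt x hx) (hlt x' hx') (by tauto) _ h
    have h2 := hinv c hc y y' hy hy' (by tauto) _ h1
    convert h2 using 1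
    ext z
    simp only [mem_sw, Equiv.swap_apply_def]
    grind
  -- no two adjacent members
  have hnoadj : ∀ c ∈ T, ∀ x ∈ c, ∀ y, y < n → y ∉ c → sw x y c ∉ T := by
    intro c hc x hx y hy hyc h
    have hall : ∀ b ∈ V, b ∈ T := by
      intro b hb
      refine (johnson_induct (n := n) (k := k) (fun c => c ∈ T ∧ ∀ x ∈ c, ∀ y, y < n → y ∉ c →
        sw x y c ∈ T) ?_ b hb _ c (hTV hc) rfl ⟨hc, hnb c hc x hx y hy hyc h⟩).1
      rintro c hcV ⟨hc, hcn⟩ x hx y hy hyc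
      have hxn : x < n := Finset.mem_range.1 ((Finset.mem_powersetCard.1 hcV).1 hx)
      have hcT := hcn x hx y hy hyc
      refine ⟨hcT, hnb _ hcT y ?_ x hxn ?_ ?_⟩
      · rw [mem_sw]; simpa using hx
      · rw [mem_sw]; simpa using hyc
      · have : sw y x (sw x y c) = c := by
          unfold sw
          rw [Equiv.swap_comm y x]
          exact sw_sw x y c
        rw [this]; exact hc
    apply hTN
    refine Finset.Subset.antisymm (nbr_subset _ _ _) fun b hb => ?_
    have hdpos : 0 < d := by
      rw [hd, Finset.card_pos]
      refine ⟨Finset.Ico (k - s + 1) (2 * k - s + 1), (mem_nbr _ _ _ _).2 ⟨?_, _,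
        Finset.mem_singleton_self _, ?_⟩⟩
      · rw [hV, Finset.mem_powersetCard]
        refine ⟨fun z hz => ?_, by simp; omega⟩
        rw [Finset.mem_Ico] at hz
        rw [Finset.mem_range]; omega
      · have : Finset.range k ∩ Finset.Ico (k - s + 1) (2 * k - s + 1)
            = Finset.Ico (k - s + 1) k := by
          ext z; simp only [Finset.mem_inter, Finset.mem_range, Finset.mem_Ico]; omega
        simp only [R]
        rw [this, Nat.card_Ico]; omega
    rw [← hdeg b hb, Finset.card_pos] at hdpos
    obtain ⟨a, ha⟩ := hdpos
    obtain ⟨haV, b', hb', hr⟩ := (mem_nbr _ _ _ _).1 ha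
    rw [Finset.mem_singleton] at hb'
    subst hb'
    exact (mem_nbr _ _ _ _).2 ⟨hb, a, hall a haV, hsymm _ _ hr⟩
  -- two distinct members are complementary
  have hcompl : ∀ a ∈ T, ∀ a' ∈ T, a ≠ a' → a' = Finset.range n \ a := by
    intro a ha a' ha' hne
    have h1 := Finset.mem_powersetCard.1 (hTV ha)
    have h2 := Finset.mem_powersetCard.1 (hTV ha')
    obtain ⟨y, hy⟩ : (a \ a').Nonempty := by
      rw [Finset.sdiff_nonempty]
      exact fun h => hne (Finset.eq_of_subset_of_card_le h (by omega))
    obtain ⟨x, hx⟩ : (a' \ a).Nonempty := by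
      rw [Finset.sdiff_nonempty]
      exact fun h => hne (Finset.eq_of_subset_of_card_le h (by omega)).symm
    rw [Finset.mem_sdiff] at hx hy
    have hyn := Finset.mem_range.1 (h1.1 hy.1)
    have hxn := Finset.mem_range.1 (h2.1 hx.1)
    ext z
    rw [Finset.mem_sdiff]
    constructor
    · intro hz
      refine ⟨h2.1 hz, fun hza => ?_⟩
      have hzn := Finset.mem_range.1 (h2.1 hz)
      exact hnoadj a' ha' z hz y hyn hy.2 (hinv a ha z y hzn hyn (by tauto) a' ha')
    · rintro ⟨hzn, hza⟩
      by_contra hza'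
      rw [Finset.mem_range] at hzn
      exact hnoadj a' ha' x hx.1 z hzn hza' (hinv a ha x z hxn hzn (by tauto) a' ha')
  obtain ⟨a, ha⟩ := hTne
  have hda := hdeg a (hTV ha)
  have hmono : nbr V R {a} ⊆ nbr V R T := by
    intro b hb
    obtain ⟨hbV, a', ha', hr⟩ := (mem_nbr _ _ _ _).1 hb
    rw [Finset.mem_singleton] at ha'
    subst ha'
    exact (mem_nbr _ _ _ _).2 ⟨hbV, a', ha, hr⟩
  by_cases hex : ∃ a' ∈ T, a ≠ a'
  · obtain ⟨a', ha', hne⟩ := hex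
    have hT2 : T ⊆ {a, Finset.range n \ a} := by
      intro b hb
      by_cases h : a = b
      · simp [h]
      · rw [hcompl a ha b hb h]; simp
    have hcT : T.card ≤ 2 := (Finset.card_le_card hT2).trans Finset.card_le_two
    have haN : a ∉ nbr V R {a} := by
      intro h
      obtain ⟨_, b, hb, hr⟩ := (mem_nbr _ _ _ _).1 h
      rw [Finset.mem_singleton] at hb
      subst hb
      have := (Finset.mem_powersetCard.1 (hTV ha)).2
      simp only [R, Finset.inter_self] at hr
      omega
    have haN' : a ∈ nbr V R T := by
      refine (mem_nbr _ _ _ _).2 ⟨hTV ha, a', ha', ?_⟩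
      simp only [R]
      rw [hcompl a ha a' ha' hne, Finset.sdiff_inter_self]
      rw [Finset.card_empty]; omega
    have : (nbr V R {a}).card < (nbr V R T).card :=
      Finset.card_lt_card (Finset.ssubset_iff_subset_ne.2 ⟨hmono, fun h => haN (h ▸ haN')⟩)
    omega
  · push Not at hex
    have : T.card ≤ 1 := Finset.card_le_one.2 fun x hx y hy => (hex x hx).symm.trans (hex y hy)
    have := Finset.card_le_card hmono
    omega
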